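/- For n ≥ 1, the invariant ring F_q[V ⊕ V*]^{B_n}, i.e. the subalgebra of F_q[x_1,…,x_n,y_1,…,y_n] of elements fixed by every element of B_n, equals the F_q-subalgebra generated by the 4n−1 elements f̃_1,…,f̃_n, f̃_1*,…,f̃_n*, and u_j for 1−n ≤ j ≤ n−1. -/

import Mathlib

open MvPolynomial Matrix

variable (F : Type) [Field F] [Fintype F] (n : ℕ)

/-- `fX F n k` is the orbit product `f_k` (1-indexed, meaningful for `1 ≤ k ≤ n`). -/
noncomputable def fX (k : ℕ) : MvPolynomial (Fin n ⊕ Fin n) F :=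
  if h : 1 ≤ k ∧ k ≤ n then
    ∏ α : Fin (k - 1) → F,
      (X (Sum.inl ⟨k - 1, by omega⟩) +
        ∑ j : Fin (k - 1), C (α j) * X (Sum.inl ⟨j.val, by omega⟩))
  else 0

/-- `fY F n k` is `f_k^*` (1-indexed), the orbit product of `y_{n+1-k}`. -/
noncomputable def fY (k : ℕ) : MvPolynomial (Fin n ⊕ Fin n) F :=
  if h : 1 ≤ k ∧ k ≤ n then
    ∏ α : Fin (k - 1) → F,
      (X (Sum.inr ⟨n - k, by omega⟩) +
        ∑ j : Fin (k - 1), C (α j) * X (Sum.inr ⟨n - 1 - j.val, by omega⟩))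
  else 0

/-- `uInv F n j` is the invariant `u_j`, for `j : ℤ`. -/
noncomputable def uInv (j : ℤ) : MvPolynomial (Fin n ⊕ Fin n) F :=
  if 0 ≤ j then ∑ k : Fin n, X (Sum.inl k) ^ (Fintype.card F) ^ j.toNat * X (Sum.inr k)
  else ∑ k : Fin n, X (Sum.inl k) * X (Sum.inr k) ^ (Fintype.card F) ^ (-j).toNat

/-- `cX F n s t` is the Dickson-type invariant `c_{s,t}` (in the `x`-variables):
the sum over strictly increasing sequences `1 ≤ j_1 < ⋯ < j_{s-t} ≤ s` (encoded as
strictly monotone functions `Fin (s-t) → Fin s`) of `∏_l f_{j_l}^{(q-1)·q^{t+l-j_l}}`. -/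
noncomputable def cX (s t : ℕ) : MvPolynomial (Fin n ⊕ Fin n) F :=
  if s ≤ n then
    ∑ g ∈ Finset.univ.filter (fun g : Fin (s - t) → Fin s => ∀ a b : Fin (s - t), a < b → g a < g b),
      ∏ l : Fin (s - t),
        fX F n ((g l).val + 1) ^ ((Fintype.card F - 1) * (Fintype.card F) ^ (t + l.val - (g l).val))
  else 0

/-- `cY F n s t` is `c_{s,t}^*` (in the `y`-variables). -/
noncomputable def cY (s t : ℕ) : MvPolynomial (Fin n ⊕ Fin n) F :=
  if s ≤ n then
    ∑ g ∈ Finset.univ.filter (fun g : Fin (s - t) → Fin s => ∀ a b : Fin (s - t), a < b → g a < g b),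
      ∏ l : Fin (s - t),
        fY F n ((g l).val + 1) ^ ((Fintype.card F - 1) * (Fintype.card F) ^ (t + l.val - (g l).val))
  else 0

/-- The action of `σ ∈ GL_n(F)` on `F[V ⊕ V*] = F[x_1,…,x_n,y_1,…,y_n]`:
`σ` acts naturally on the span of the `x_j` (identified with `V`, so `σ·x_j = ∑_i σ_{ij} x_i`)
and by `σ·λ = λ ∘ σ⁻¹` on the span of the `y_j` (so `σ·y_j = ∑_i (σ⁻¹)_{ji} y_i`). -/
noncomputable def gact (σ : GL (Fin n) F) :
    MvPolynomial (Fin n ⊕ Fin n) F →ₐ[F] MvPolynomial (Fin n ⊕ Fin n) F :=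
  aeval (Sum.elim
    (fun j => ∑ i : Fin n, C ((σ : Matrix (Fin n) (Fin n) F) i j) * X (Sum.inl i))
    (fun j => ∑ i : Fin n,
      C (((σ⁻¹ : GL (Fin n) F) : Matrix (Fin n) (Fin n) F) j i) * X (Sum.inr i)))

/-- `σ` belongs to `U_n`: upper unipotent. -/
def isUpperUnipotent (σ : GL (Fin n) F) : Prop :=
  (∀ i : Fin n, (σ : Matrix (Fin n) (Fin n) F) i i = 1) ∧
    ∀ i j : Fin n, j < i → (σ : Matrix (Fin n) (Fin n) F) i j = 0

/-- `σ` belongs to `B_n`: upper triangular (invertibility is part of `GL`). -/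
def isUpperTriangular (σ : GL (Fin n) F) : Prop :=
  ∀ i j : Fin n, j < i → (σ : Matrix (Fin n) (Fin n) F) i j = 0


/-!
Write `q` for the order of `F`, `L_i` and `L*_j` for the additive polynomials whose roots are the
combinations of `x_1, …, x_i` and of `y_n, …, y_{n+1-j}`, and `S` for the algebra generated by the
`f̃_i` and `f̃_i^*`, which contains their coefficients. Every summand of `∑ k, L_i(x_k) L*_j(y_k)`
vanishes if `i + j = n`, and only `f_{i+1} f^*_{j+1}` remains if `i + j + 1 = n`. Expanding this
sum, raised to the power `q - 1` in the second case, gives an element of `S` whose part of highest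
degree in the `u_m` is a power of `u_{i-j}`. Hence over `S` the algebra `S[u_m]` is spanned by as
many reduced monomials in the `u_m` as `B_n` has elements.

The `u_m` with `m ≥ 0` determine the `y_k` rationally over the field of the `x_k`, so up to
denominators from the `f̃_i` every polynomial is a combination of `∏ i, (q - 1) q ^ (i - 1) = |B_n|`
monomials in the `x_k` over `S[u_m]`. By Dedekind's independence of characters such a spanning
family is a basis, whence a multiple of each `B_n`-invariant by a product of `f̃_i` lies in
`S[u_m]`. By symmetry so does a multiple by a product of `f̃_i^*`. The reduced monomials are
linearly independent over `S`, by the same counting for `B_n × B_n`, and the two multipliers are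
coprime, so neither is needed.
-/

section Dedekind

section FaithfulBase

variable {E R I : Type*} [CommRing E] [CommRing R] [Algebra E R]

/-- The family `z` spans the `E`-module `R` up to denominators from `E`. -/
def SpansUpToDenominators (E : Type*) {R I : Type*} [CommRing E] [CommRing R] [Algebra E R]
    (z : I → R) : Prop :=
  ∀ r, ∃ D : E, D ≠ 0 ∧ D • r ∈ Submodule.span E (Set.range z)

variable [IsDomain R] [FaithfulSMul E R] {z : I → R}

theorem SpansUpToDenominators.det_ne_zero [Fintype I] [DecidableEq I]
    (hz : SpansUpToDenominators E z)
    {τ : I → R →ₐ[E] R} (hτ : Function.Injective τ) :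
    (Matrix.of fun a i => τ a (z i)).det ≠ 0 := by
  intro hdet
  obtain ⟨v, hv, hvM⟩ := Matrix.exists_vecMul_eq_zero_iff.mpr hdet
  let ψ : R →ₗ[E] R := ∑ a, v a • (τ a).toLinearMap
  have hψspan : Submodule.span E (Set.range z) ≤ LinearMap.ker ψ := by
    rw [Submodule.span_le]
    rintro _ ⟨i, rfl⟩
    simpa [ψ, Matrix.vecMul, dotProduct] using congrFun hvM i
  have hψ : ψ = 0 := by
    ext r
    obtain ⟨D, hD, hDr⟩ := hz r
    have : algebraMap E R D * ψ r = 0 := by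
      rw [← Algebra.smul_def, ← map_smul]
      exact hψspan hDr
    exact (mul_eq_zero.mp this).resolve_left
      ((map_ne_zero_iff _ (FaithfulSMul.algebraMap_injective E R)).mpr hD)
  have hli := (linearIndependent_algHom_toLinearMap E R R).comp τ hτ
  exact hv (funext (Fintype.linearIndependent_iff.mp hli v hψ))

theorem SpansUpToDenominators.linearIndependent [Finite I] (hz : SpansUpToDenominators E z)
    {τ : I → R →ₐ[E] R} (hτ : Function.Injective τ) : LinearIndependent E z := by
  classical
  have := Fintype.ofFinite I
  refine Fintype.linearIndependent_iff.mpr fun g hg i => ?_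
  have hker : Matrix.of (fun a i => τ a (z i)) *ᵥ (fun i => algebraMap E R (g i)) = 0 := by
    ext a
    simpa [Matrix.mulVec, dotProduct, Algebra.smul_def, mul_comm] using congrArg (τ a) hg
  exact FaithfulSMul.algebraMap_injective E R <|
    (congrFun (Matrix.eq_zero_of_mulVec_eq_zero (hz.det_ne_zero hτ) hker) i).trans
      (map_zero _).symm

end FaithfulBase

variable {k R I : Type*} [CommRing k] [CommRing R] [Algebra k R]

theorem span_subalgebra_mono {S S' : Subalgebra k R} (h : S ≤ S') {s : Set R} {r : R}
    (hr : r ∈ Submodule.span S s) : r ∈ Submodule.span S' s := by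
  induction hr using Submodule.span_induction with
  | mem r hr => exact Submodule.subset_span hr
  | zero => exact zero_mem _
  | add r r' _ _ hr hr' => exact add_mem hr hr'
  | smul a r _ hr => exact Submodule.smul_mem _ (⟨a, h a.2⟩ : S') hr

theorem SpansUpToDenominators.mono {S S' : Subalgebra k R} (h : S ≤ S') {z : I → R}
    (hz : SpansUpToDenominators S z) : SpansUpToDenominators S' z := by
  intro r
  obtain ⟨D, hD, hDr⟩ := hz r
  exact ⟨Subalgebra.inclusion h D,
    (map_ne_zero_iff _ (Subalgebra.inclusion_injective h)).mpr hD, span_subalgebra_mono h hDr⟩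

/-- The subalgebra of the elements of `R` that every endomorphism in `T` fixes. -/
def fixedSubalgebra (T : Set (R →ₐ[k] R)) : Subalgebra k R :=
  ⨅ τ ∈ T, AlgHom.equalizer τ (AlgHom.id k R)

theorem mem_fixedSubalgebra {T : Set (R →ₐ[k] R)} {r : R} :
    r ∈ fixedSubalgebra T ↔ ∀ τ ∈ T, τ r = r := by
  simp [fixedSubalgebra, Algebra.mem_iInf]

theorem mem_fixedSubalgebra_of_mul_mem [IsDomain R] {T : Set (R →ₐ[k] R)} {a r : R} (ha : a ≠ 0)
    (haT : a ∈ fixedSubalgebra T) (h : a * r ∈ fixedSubalgebra T) : r ∈ fixedSubalgebra T := by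
  rw [mem_fixedSubalgebra] at *
  intro τ hτ
  have := h τ hτ
  rw [map_mul, haT τ hτ] at this
  exact mul_left_cancel₀ ha this

variable [IsDomain R] [Finite I] {T : Set (R →ₐ[k] R)} {S : Subalgebra k R} {z : I → R}

theorem SpansUpToDenominators.linearIndependent_fixedSubalgebra
    (hz : SpansUpToDenominators (fixedSubalgebra T) z) (hT : T.ncard = Nat.card I) :
    LinearIndependent (fixedSubalgebra T) z := by
  rcases isEmpty_or_nonempty I with hI | hI
  · exact linearIndependent_empty_type
  have : Finite T := Set.finite_of_ncard_ne_zero (hT ▸ Nat.card_pos.ne')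
  obtain ⟨e⟩ := Finite.card_eq.mp (hT.symm.trans (Nat.card_coe_set_eq T).symm)
  let τ (i : I) : R →ₐ[fixedSubalgebra T] R :=
    { (e i : R →ₐ[k] R) with commutes' := fun a => mem_fixedSubalgebra.mp a.2 _ (e i).2 }
  refine hz.linearIndependent (τ := τ) fun i j hij => e.injective (Subtype.ext ?_)
  ext r
  exact DFunLike.congr_fun hij r

theorem SpansUpToDenominators.linearIndependent_of_le (hz : SpansUpToDenominators S z)
    (hS : S ≤ fixedSubalgebra T) (hT : T.ncard = Nat.card I) : LinearIndependent S z := by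
  have := Fintype.ofFinite I
  have hli := (hz.mono hS).linearIndependent_fixedSubalgebra hT
  refine Fintype.linearIndependent_iff.mpr fun g hg i => ?_
  have hgi := Fintype.linearIndependent_iff.mp hli (fun i => Subalgebra.inclusion hS (g i))
    (by simpa [Subalgebra.smul_def] using hg) i
  exact (map_eq_zero_iff _ (Subalgebra.inclusion_injective hS)).mp hgi

theorem SpansUpToDenominators.mem_of_mem_fixedSubalgebra (hz : SpansUpToDenominators S z)
    (hS : S ≤ fixedSubalgebra T) (hT : T.ncard = Nat.card I) {i₀ : I} (hi₀ : z i₀ = 1) {p : R}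
    (hp : p ∈ fixedSubalgebra T) (hpz : p ∈ Submodule.span S (Set.range z)) : p ∈ S := by
  classical
  have := Fintype.ofFinite I
  obtain ⟨c, hc⟩ := (Submodule.mem_span_range_iff_exists_fun S).mp hpz
  have hli := (hz.mono hS).linearIndependent_fixedSubalgebra hT
  have hc₀ := Fintype.linearIndependent_iffₛ.mp hli (fun i => Subalgebra.inclusion hS (c i))
    (Pi.single i₀ ⟨p, hp⟩) (by simpa [Subalgebra.smul_def, Pi.single_apply, hi₀] using hc) i₀
  rw [Pi.single_eq_same] at hc₀
  have : (c i₀ : R) = p := congrArg Subtype.val hc₀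
  exact this ▸ (c i₀).2

end Dedekind

section Weights

variable {S R ι κ : Type*} [CommRing S] [CommRing R] [Algebra S R]

/-- The `S`-span of the monomials in the family `g` whose weight is less than `m`, where `g i` has
weight `w i`. -/
def weightLT (S : Type*) [CommRing S] [Algebra S R] (g : ι → R) (w : ι → ℕ) (m : ℕ) :
    Submodule S R :=
  Submodule.span S ((fun e : ι →₀ ℕ => e.prod fun i a => g i ^ a) '' {e | Finsupp.weight w e < m})

variable {g : ι → R} {w d : ι → ℕ}

theorem weightLT_mono {a b : ℕ} (h : a ≤ b) : weightLT S g w a ≤ weightLT S g w b :=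
  Submodule.span_mono (Set.image_mono fun _ he => lt_of_lt_of_le he h)

theorem prod_pow_mem_weightLT {e : ι →₀ ℕ} {m : ℕ} (h : Finsupp.weight w e < m) :
    (e.prod fun i a => g i ^ a) ∈ weightLT S g w m :=
  Submodule.subset_span ⟨e, h, rfl⟩

theorem pow_mem_weightLT {i : ι} {a m : ℕ} (h : w i * a < m) : g i ^ a ∈ weightLT S g w m := by
  have : Finsupp.weight w (Finsupp.single i a) < m := by
    rwa [Finsupp.weight_single, smul_eq_mul, mul_comm]
  simpa using prod_pow_mem_weightLT (S := S) (g := g) this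

theorem algebraMap_mem_weightLT (s : S) {m : ℕ} (hm : 0 < m) :
    algebraMap S R s ∈ weightLT S g w m := by
  have : (1 : R) ∈ weightLT S g w m := by
    simpa using prod_pow_mem_weightLT (S := S) (g := g) (w := w) (e := 0) (by simpa using hm)
  simpa [Algebra.smul_def] using Submodule.smul_mem _ s this

theorem mul_mem_weightLT {a b c : ℕ} (h : a + b ≤ c + 1) {x y : R} (hx : x ∈ weightLT S g w a)
    (hy : y ∈ weightLT S g w b) : x * y ∈ weightLT S g w c := by
  have hxy := Submodule.mul_mem_mul hx hy
  unfold weightLT at hxy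
  rw [Submodule.span_mul_span] at hxy
  refine Submodule.span_mono ?_ hxy
  rintro _ ⟨_, ⟨e, he, rfl⟩, _, ⟨e', he', rfl⟩, rfl⟩
  refine ⟨e + e', ?_, Finsupp.prod_add_index' (by simp) fun _ _ _ => pow_add _ _ _⟩
  simp only [Set.mem_ofPred_eq, map_add] at *
  omega

theorem pow_sub_pow_mem_weightLT {a : ℕ} {x y : R} (hy : y ∈ weightLT S g w (a + 1))
    (hxy : x - y ∈ weightLT S g w a) (k : ℕ) : x ^ k - y ^ k ∈ weightLT S g w (k * a) := by
  have hx : x ∈ weightLT S g w (a + 1) := by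
    simpa using add_mem (weightLT_mono a.le_succ hxy) hy
  have hxk (k : ℕ) : x ^ k ∈ weightLT S g w (k * a + 1) := by
    induction k with
    | zero => simpa using algebraMap_mem_weightLT (R := R) (1 : S) Nat.one_pos
    | succ k ih => exact pow_succ x k ▸ mul_mem_weightLT (by rw [Nat.succ_mul]; omega) ih hx
  induction k with
  | zero => simp
  | succ k ih =>
    rw [show x ^ (k + 1) - y ^ (k + 1) = x ^ k * (x - y) + (x ^ k - y ^ k) * y by ring]
    exact add_mem (mul_mem_weightLT (by rw [Nat.succ_mul]; omega) (hxk k) hxy)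
      (mul_mem_weightLT (by rw [Nat.succ_mul]; omega) ih hy)

theorem pow_mem_weightLT_of_sub_mem {a k : ℕ} {x y : R} (hy : y ∈ weightLT S g w (a + 1))
    (hxy : x - y ∈ weightLT S g w a) (hk : x ^ k ∈ (algebraMap S R).range) (hka : 0 < k * a) :
    y ^ k ∈ weightLT S g w (k * a) := by
  obtain ⟨s, hs⟩ := hk
  simpa [hs] using sub_mem (algebraMap_mem_weightLT s hka) (pow_sub_pow_mem_weightLT hy hxy k)

theorem weightLT_comp_le (f : κ → ι) (m : ℕ) :
    weightLT S (g ∘ f) (w ∘ f) m ≤ weightLT S g w m := by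
  refine Submodule.span_mono ?_
  rintro _ ⟨e, he, rfl⟩
  refine ⟨e.mapDomain f, ?_, Finsupp.prod_mapDomain_index (by simp) fun _ _ _ => pow_add _ _ _⟩
  simpa [Finsupp.weight_apply, Finsupp.sum_mapDomain_index, add_mul] using he

/-- The power `g i ^ d i` of every member of the family `g` is an `S`-combination of monomials of
smaller weight. -/
def IsWeightReducible (S : Type*) [CommRing S] [Algebra S R] (g : ι → R) (w d : ι → ℕ) : Prop :=
  ∀ i, g i ^ d i ∈ weightLT S g w (w i * d i)

theorem IsWeightReducible.sumElim (hg : IsWeightReducible S g w d) {g' : κ → R} {w' d' : κ → ℕ}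
    (hg' : IsWeightReducible S g' w' d') :
    IsWeightReducible S (Sum.elim g g') (Sum.elim w w') (Sum.elim d d') := by
  rintro (i | i)
  · exact weightLT_comp_le (g := Sum.elim g g') (w := Sum.elim w w') Sum.inl _ (hg i)
  · exact weightLT_comp_le (g := Sum.elim g g') (w := Sum.elim w w') Sum.inr _ (hg' i)

variable [Fintype ι]

/-- The monomial in the family `g` with exponents `e i < d i`. -/
def reducedMonomial (g : ι → R) (d : ι → ℕ) (e : ∀ i, Fin (d i)) : R :=
  ∏ i, g i ^ (e i : ℕ)

theorem reducedMonomial_zero (g : ι → R) (d : ι → ℕ) [∀ i, NeZero (d i)] :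
    reducedMonomial g d 0 = 1 := by
  simp [reducedMonomial]

theorem reducedMonomial_sumElim [Fintype κ] (g : ι → R) (g' : κ → R) (d : ι → ℕ) (d' : κ → ℕ)
    (e : ∀ i, Fin (Sum.elim d d' i)) :
    reducedMonomial (Sum.elim g g') (Sum.elim d d') e =
      reducedMonomial g d (fun i => e (.inl i)) * reducedMonomial g' d' (fun i => e (.inr i)) := by
  simp [reducedMonomial]

theorem IsWeightReducible.prod_pow_mem_span (hg : IsWeightReducible S g w d) (e : ι →₀ ℕ) :
    (e.prod fun i a => g i ^ a) ∈ Submodule.span S (Set.range (reducedMonomial g d)) := by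
  induction hm : Finsupp.weight w e using Nat.strong_induction_on generalizing e with
  | _ m ih =>
    by_cases h : ∀ i, e i < d i
    · refine Submodule.subset_span ⟨fun i => ⟨e i, h i⟩, ?_⟩
      exact (Finsupp.prod_fintype _ _ fun i => pow_zero _).symm
    · push Not at h
      obtain ⟨i, hi⟩ := h
      obtain ⟨e', rfl⟩ := exists_add_of_le (Finsupp.single_le_iff.mpr hi)
      rw [map_add, Finsupp.weight_single, smul_eq_mul, mul_comm] at hm
      have hlt : ((Finsupp.single i (d i) + e').prod fun i a => g i ^ a) ∈ weightLT S g w m := by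
        rw [Finsupp.prod_add_index' (by simp) fun _ _ _ => pow_add _ _ _,
          Finsupp.prod_single_index (h := fun i a => g i ^ a) (pow_zero _)]
        exact mul_mem_weightLT (b := Finsupp.weight w e' + 1) (by omega) (hg i)
          (prod_pow_mem_weightLT (Nat.lt_succ_self _))
      refine Submodule.span_le.mpr ?_ hlt
      rintro _ ⟨e'', he'', rfl⟩
      exact ih _ he'' _ rfl

theorem IsWeightReducible.mem_span_of_mem_adjoin (hg : IsWeightReducible S g w d) {r : R}
    (hr : r ∈ Algebra.adjoin S (Set.range g)) :
    r ∈ Submodule.span S (Set.range (reducedMonomial g d)) := by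
  rw [Algebra.adjoin_range_eq_range_aeval] at hr
  obtain ⟨p, rfl⟩ := hr
  change aeval g p ∈ _
  rw [aeval_def, eval₂_eq]
  refine Submodule.sum_mem _ fun e _ => ?_
  rw [← Algebra.smul_def]
  exact Submodule.smul_mem _ _ (hg.prod_pow_mem_span e)

theorem IsWeightReducible.mem_span_of_mem_sup {k : Type*} [CommRing k] [Algebra k R]
    {S : Subalgebra k R} (hg : IsWeightReducible S g w d) {r : R}
    (hr : r ∈ S ⊔ Algebra.adjoin k (Set.range g)) :
    r ∈ Submodule.span S (Set.range (reducedMonomial g d)) := by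
  refine hg.mem_span_of_mem_adjoin ?_
  rw [← Subalgebra.mem_restrictScalars k, Algebra.restrictScalars_adjoin, Algebra.adjoin_union,
    Algebra.adjoin_eq]
  exact hr

end Weights

section AdditivePolynomials

variable (K : Type*) [Field K] [Fintype K] {R : Type*} [CommRing R] [Algebra K R]

local notation "q" => Fintype.card K

theorem prod_X_sub_C_eq_X_pow_card_sub_X :
    ∏ c : K, (Polynomial.X - Polynomial.C c) = Polynomial.X ^ q - Polynomial.X := by
  have hdeg := FiniteField.X_pow_card_sub_X_natDegree_eq K (Fintype.one_lt_card (α := K))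
  have hmonic : (Polynomial.X ^ q - Polynomial.X : Polynomial K).Monic :=
    Polynomial.monic_X_pow_sub (by simpa using Fintype.one_lt_card (α := K))
  have h := Polynomial.prod_multiset_X_sub_C_of_monic_of_roots_card_eq hmonic
    (by rw [hdeg, FiniteField.roots_X_pow_card_sub_X]; rfl)
  rwa [FiniteField.roots_X_pow_card_sub_X] at h

theorem prod_add_smul (a b : R) : ∏ c : K, (a + c • b) = a ^ q - b ^ (q - 1) * a := by
  have hhom : ∏ c : K, (X 0 - C c * X 1 : MvPolynomial (Fin 2) K) =
      X 0 ^ q - X 0 * X 1 ^ (q - 1) := by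
    have h := congrArg (fun p => Polynomial.homogenize p q) (prod_X_sub_C_eq_X_pow_card_sub_X K)
    have hprod := Polynomial.homogenize_finsetProd (s := Finset.univ) (n := fun _ => 1)
      fun (c : K) _ => (Polynomial.natDegree_X_sub_C c).le
    rw [Finset.sum_const, smul_eq_mul, mul_one, Finset.card_univ] at hprod
    simpa [hprod, Fintype.card_ne_zero, Polynomial.homogenize_X_pow] using h
  rw [← Equiv.prod_comp (Equiv.neg K)]
  simpa [Algebra.smul_def, sub_eq_add_neg, mul_comm] using congrArg (aeval ![a, b]) hhom

/-- The additive polynomial `T ↦ ∏ v, (T + v)`, with `v` running over the combinations of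
`z 0, …, z (k - 1)`, as a linear map; see `orbitMap_eq_prod`. -/
noncomputable def orbitMap (z : ℕ → R) : ℕ → R →ₗ[K] R
  | 0 => LinearMap.id
  | k + 1 => (FiniteField.frobeniusAlgHom K R).toLinearMap ∘ₗ orbitMap z k -
      LinearMap.mulLeft K (orbitMap z k (z k) ^ (q - 1)) ∘ₗ orbitMap z k

/-- The product of the elements `z k + v`, with `v` running over the combinations of
`z 0, …, z (k - 1)`. For the coordinates `z i = x_{i+1}` it is the paper's `f_{k+1}`. -/
noncomputable def orbitProd (z : ℕ → R) (k : ℕ) : R := orbitMap K z k (z k)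

/-- The power of `orbitProd` that is invariant under scaling of `z k`; the paper's `f̃_{k+1}`. -/
noncomputable def orbitNorm (z : ℕ → R) (k : ℕ) : R := orbitProd K z k ^ (q - 1)

/-- The coefficient of `T ^ q ^ s` in the additive polynomial `orbitMap K z k`. -/
noncomputable def orbitCoeff (z : ℕ → R) : ℕ → ℕ → R
  | 0, 0 => 1
  | 0, _ + 1 => 0
  | k + 1, 0 => -(orbitNorm K z k * orbitCoeff z k 0)
  | k + 1, s + 1 => orbitCoeff z k s ^ q - orbitNorm K z k * orbitCoeff z k (s + 1)

variable {K} {z : ℕ → R} {k : ℕ}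

theorem orbitMap_zero (T : R) : orbitMap K z 0 T = T := rfl

theorem orbitMap_succ (T : R) :
    orbitMap K z (k + 1) T = orbitMap K z k T ^ q - orbitNorm K z k * orbitMap K z k T := rfl

theorem orbitMap_apply_of_lt {i : ℕ} (h : i < k) : orbitMap K z k (z i) = 0 := by
  induction k with
  | zero => omega
  | succ k ih =>
    rw [orbitMap_succ]
    rcases Nat.lt_succ_iff_lt_or_eq.mp h with h | rfl
    · rw [ih h, zero_pow Fintype.card_ne_zero, mul_zero, sub_zero]
    · rw [orbitNorm, orbitProd, ← pow_succ, Nat.sub_add_cancel Fintype.card_pos, sub_self]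

theorem orbitMap_eq_zero_of_mem_span {v : R} (hv : v ∈ Submodule.span K (z '' Set.Iio k)) :
    orbitMap K z k v = 0 := by
  refine (Submodule.span_le (p := LinearMap.ker (orbitMap K z k))).mpr ?_ hv
  rintro _ ⟨i, hi, rfl⟩
  exact orbitMap_apply_of_lt hi

theorem orbitMap_eq_prod (T : R) :
    orbitMap K z k T = ∏ α : Fin k → K, (T + ∑ j, α j • z j) := by
  induction k generalizing T with
  | zero => simp [orbitMap_zero]
  | succ k ih =>
    have hsplit (c : K) : orbitMap K z k T + c • orbitProd K z k =
        ∏ α : Fin k → K, (T + c • z k + ∑ j, α j • z j) := by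
      rw [← ih, map_add, map_smul, orbitProd]
    rw [orbitMap_succ, orbitNorm, ← prod_add_smul, ← (Fin.snocEquiv fun _ => K).prod_comp,
      Fintype.prod_prod_type]
    simp [hsplit, Fin.sum_univ_castSucc, Fin.snocEquiv, add_assoc, add_comm]

theorem orbitProd_ne_zero [IsDomain R] (h : z k ∉ Submodule.span K (z '' Set.Iio k)) :
    orbitProd K z k ≠ 0 := by
  rw [orbitProd, orbitMap_eq_prod]
  refine Finset.prod_ne_zero_iff.mpr fun α _ h0 => h ?_
  rw [eq_neg_of_add_eq_zero_left h0]
  exact neg_mem (sum_mem fun j _ =>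
    Submodule.smul_mem _ _ (Submodule.subset_span ⟨j, j.2, rfl⟩))

theorem orbitCoeff_of_lt {s : ℕ} (h : k < s) : orbitCoeff K z k s = 0 := by
  induction k generalizing s with
  | zero =>
    obtain ⟨s, rfl⟩ := Nat.exists_eq_succ_of_ne_zero h.ne'
    rfl
  | succ k ih =>
    obtain ⟨s, rfl⟩ := Nat.exists_eq_succ_of_ne_zero (Nat.ne_zero_of_lt h)
    simp [orbitCoeff, ih (Nat.succ_lt_succ_iff.mp h), ih (Nat.lt_of_succ_lt h),
      Fintype.card_ne_zero]

theorem orbitCoeff_self : orbitCoeff K z k k = 1 := by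
  induction k with
  | zero => rfl
  | succ k ih => simp [orbitCoeff, ih, orbitCoeff_of_lt]

theorem orbitCoeff_mem {S : Subalgebra K R} (h : ∀ i < k, orbitNorm K z i ∈ S) (s : ℕ) :
    orbitCoeff K z k s ∈ S := by
  induction k generalizing s with
  | zero =>
    cases s
    exacts [one_mem S, zero_mem S]
  | succ k ih =>
    have ih := ih fun i hi => h i (hi.trans k.lt_succ_self)
    cases s with
    | zero => exact neg_mem (mul_mem (h k k.lt_succ_self) (ih 0))
    | succ s => exact sub_mem (pow_mem (ih s) _) (mul_mem (h k k.lt_succ_self) (ih (s + 1)))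

theorem sum_pow_card_pow {ι : Type*} (t : Finset ι) (f : ι → R) (s : ℕ) :
    (∑ i ∈ t, f i) ^ q ^ s = ∑ i ∈ t, f i ^ q ^ s := by
  induction s with
  | zero => simp
  | succ s ih =>
    have h := map_sum (FiniteField.frobeniusAlgHom K R) (fun i => f i ^ q ^ s) t
    simp only [FiniteField.coe_frobeniusAlgHom] at h
    simp only [pow_succ, pow_mul, ih, h]

theorem orbitMap_eq_sum (T : R) :
    orbitMap K z k T = ∑ s ∈ Finset.range (k + 1), orbitCoeff K z k s * T ^ q ^ s := by
  induction k with
  | zero => simp [orbitMap_zero, orbitCoeff]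
  | succ k ih =>
    have hfrob := sum_pow_card_pow (K := K) (Finset.range (k + 1))
      (fun s => orbitCoeff K z k s * T ^ q ^ s) 1
    rw [pow_one] at hfrob
    have hext : ∑ s ∈ Finset.range (k + 1), orbitCoeff K z k s * T ^ q ^ s =
        ∑ s ∈ Finset.range (k + 2), orbitCoeff K z k s * T ^ q ^ s := by
      rw [Finset.sum_range_succ _ (k + 1), orbitCoeff_of_lt k.lt_succ_self, zero_mul, add_zero]
    rw [orbitMap_succ, ih, hfrob, hext, Finset.sum_range_succ' _ (k + 1),
      Finset.sum_range_succ' _ (k + 1)]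
    simp only [orbitCoeff, sub_mul, mul_pow, ← pow_mul, ← pow_succ, Finset.sum_sub_distrib, mul_add,
      Finset.mul_sum, mul_assoc]
    ring

theorem orbitMap_mem {S : Subalgebra K R} (h : ∀ i < k, orbitNorm K z i ∈ S) {T : R}
    (hT : T ∈ S) : orbitMap K z k T ∈ S := by
  rw [orbitMap_eq_sum]
  exact sum_mem fun s _ => mul_mem (orbitCoeff_mem h s) (pow_mem hT _)

/-- On the flag spanned by `z 0, …, z (n - 1)` the endomorphism `τ` acts by an invertible triangular
matrix. -/
def IsTriangularOn (z : ℕ → R) (n : ℕ) (τ : R →ₐ[K] R) : Prop :=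
  ∀ i < n, ∃ c : K, c ≠ 0 ∧ τ (z i) - c • z i ∈ Submodule.span K (z '' Set.Iio i)

theorem IsTriangularOn.map_orbitNorm_of_map_orbitMap {n : ℕ} {τ : R →ₐ[K] R}
    (h : IsTriangularOn z n τ) (hk : k < n)
    (hcomm : ∀ T, τ (orbitMap K z k T) = orbitMap K z k (τ T)) :
    τ (orbitNorm K z k) = orbitNorm K z k := by
  obtain ⟨c, hc, hcz⟩ := h k hk
  have hmap := orbitMap_eq_zero_of_mem_span hcz
  rw [map_sub, map_smul, sub_eq_zero] at hmap
  rw [orbitNorm, orbitProd, map_pow, hcomm, hmap, smul_pow,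
    FiniteField.pow_card_sub_one_eq_one c hc, one_smul]

theorem IsTriangularOn.map_orbitMap {n : ℕ} {τ : R →ₐ[K] R} (h : IsTriangularOn z n τ)
    (hk : k ≤ n) (T : R) : τ (orbitMap K z k T) = orbitMap K z k (τ T) := by
  induction k generalizing T with
  | zero => rfl
  | succ k ih =>
    have ih := ih (Nat.le_of_succ_le hk)
    rw [orbitMap_succ, orbitMap_succ, map_sub, map_pow, map_mul, ih,
      h.map_orbitNorm_of_map_orbitMap hk ih]

theorem IsTriangularOn.map_orbitNorm {n : ℕ} {τ : R →ₐ[K] R} (h : IsTriangularOn z n τ)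
    (hk : k < n) : τ (orbitNorm K z k) = orbitNorm K z k :=
  h.map_orbitNorm_of_map_orbitMap hk (h.map_orbitMap hk.le)

end AdditivePolynomials

section Pairing

/-- The degree of `z i` over the subalgebra generated by the invariants `orbitNorm K z j`,
`j ≤ i`. -/
def orbitDegree (K : Type*) [Fintype K] (n : ℕ) (i : Fin n) : ℕ :=
  (Fintype.card K - 1) * Fintype.card K ^ (i : ℕ)

/-- The paper's `u_m`, where `x` lists the coordinates of `V` and `y` the dual coordinates in
reverse order. -/
def twistedPairing (K : Type*) [Fintype K] {R : Type*} [CommSemiring R] (n : ℕ) (x y : ℕ → R)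
    (m : ℤ) : R :=
  ∑ k ∈ Finset.range n, x k ^ Fintype.card K ^ m.toNat *
    y (n - 1 - k) ^ Fintype.card K ^ (-m).toNat

/-- The bidegree `(s, t)` of the relation that reduces the power of `u_{s - t}`. The first summand
lists the relations with `s + t = n - 1`, the second those with `s + t = n`; together they reach
every `u_m` with `|m| < n` exactly once. -/
def pairingIndex (n : ℕ) : Fin n ⊕ Fin (n - 1) → ℕ × ℕ :=
  Sum.elim (fun k => (k, n - 1 - k)) fun k => (k + 1, n - 1 - k)

/-- The invariants `u_m`, `|m| < n`, as a family indexed like their relations. -/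
def pairingFamily (K : Type*) [Fintype K] {R : Type*} [CommSemiring R] (n : ℕ) (x y : ℕ → R)
    (e : Fin n ⊕ Fin (n - 1)) : R :=
  twistedPairing K n x y ((pairingIndex n e).1 - (pairingIndex n e).2)

/-- The degree of `u_m` as a polynomial in the coordinates. -/
def pairingWeight (K : Type*) [Fintype K] (m : ℤ) : ℕ :=
  Fintype.card K ^ m.toNat + Fintype.card K ^ (-m).toNat

/-- The power of `u_m` that the relations reduce. -/
def pairingDegree (K : Type*) [Fintype K] (n : ℕ) : Fin n ⊕ Fin (n - 1) → ℕ :=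
  Sum.elim (fun k => Fintype.card K ^ min (k : ℕ) (n - 1 - k) * (Fintype.card K - 1))
    fun k => Fintype.card K ^ min (k + 1 : ℕ) (n - 1 - k)

theorem range_pairingIndex (n : ℕ) :
    Set.range (fun e => ((pairingIndex n e).1 - (pairingIndex n e).2 : ℤ)) =
      Set.Icc (1 - (n : ℤ)) (n - 1) := by
  ext m
  constructor
  · rintro ⟨k | k, rfl⟩ <;> have := k.2 <;> simp [pairingIndex] <;> omega
  · rintro ⟨hl, hu⟩
    rcases Int.emod_two_eq_zero_or_one (n - 1 + m) with h | h
    · exact ⟨.inl ⟨((n - 1 + m) / 2).toNat, by omega⟩, by simp [pairingIndex]; omega⟩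
    · exact ⟨.inr ⟨((n + m) / 2).toNat - 1, by omega⟩, by simp [pairingIndex]; omega⟩

theorem sum_min_add_sum_min (m : ℕ) :
    ∑ k ∈ Finset.range (m + 1), min k (m - k) + ∑ k ∈ Finset.range m, min (k + 1) (m - k) =
      ∑ k ∈ Finset.range (m + 1), k := by
  induction m with
  | zero => simp
  | succ m ih =>
    have hodd : ∑ k ∈ Finset.range (m + 2), min k (m + 1 - k) =
        ∑ k ∈ Finset.range m, min (k + 1) (m - k) := by
      rw [Finset.sum_range_succ', Finset.sum_range_succ]
      simp
    have heven : ∑ k ∈ Finset.range (m + 1), min (k + 1) (m + 1 - k) =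
        ∑ k ∈ Finset.range (m + 1), min k (m - k) + (m + 1) := by
      have (k : ℕ) (hk : k ∈ Finset.range (m + 1)) :
          min (k + 1) (m + 1 - k) = min k (m - k) + 1 := by
        have := Finset.mem_range.mp hk
        omega
      rw [Finset.sum_congr rfl this, Finset.sum_add_distrib]
      simp
    rw [hodd, heven, Finset.sum_range_succ _ (m + 1), ← ih]
    omega

theorem prod_pairingDegree (K : Type*) [Fintype K] (n : ℕ) :
    ∏ e, pairingDegree K n e = ∏ i, orbitDegree K n i := by
  rcases n with _ | m
  · rfl
  rw [Fintype.prod_sum_type]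
  change (∏ k : Fin (m + 1), Fintype.card K ^ min (k : ℕ) (m - k) * (Fintype.card K - 1)) *
    ∏ k : Fin m, Fintype.card K ^ min (k + 1 : ℕ) (m - k) =
    ∏ k : Fin (m + 1), (Fintype.card K - 1) * Fintype.card K ^ (k : ℕ)
  simp only [Finset.prod_mul_distrib, Finset.prod_pow_eq_pow_sum]
  rw [Fin.sum_univ_eq_sum_range (fun k => k) (m + 1), ← sum_min_add_sum_min, pow_add,
    Fin.sum_univ_eq_sum_range (fun k => min k (m - k)) (m + 1),
    Fin.sum_univ_eq_sum_range (fun k => min (k + 1) (m - k)) m]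
  ring

variable {K : Type*} [Fintype K] {R : Type*} [CommRing R]

local notation "q" => Fintype.card K

theorem pairingWeight_mul (s t : ℕ) : pairingWeight K (s - t) * q ^ min s t = q ^ s + q ^ t := by
  rw [pairingWeight, add_mul, ← pow_add, ← pow_add]
  congr 2 <;> omega

theorem twistedPairing_comm (n : ℕ) (x y : ℕ → R) (m : ℤ) :
    twistedPairing K n x y m = twistedPairing K n y x (-m) := by
  unfold twistedPairing
  rw [← Finset.sum_range_reflect]
  refine Finset.sum_congr rfl fun k hk => ?_
  have := Finset.mem_range.mp hk
  rw [show n - 1 - (n - 1 - k) = k by omega, neg_neg, mul_comm]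

theorem range_pairingFamily (n : ℕ) (x y : ℕ → R) :
    Set.range (pairingFamily K n x y) =
      twistedPairing K n x y '' Set.Icc (1 - (n : ℤ)) (n - 1) := by
  rw [← range_pairingIndex, ← Set.range_comp]
  rfl

variable [Field K] [Algebra K R] {n : ℕ} {x y : ℕ → R} {i j : ℕ}

instance (n : ℕ) (i : Fin n) : NeZero (orbitDegree K n i) :=
  ⟨(Nat.mul_pos (Nat.sub_pos_of_lt Fintype.one_lt_card) (pow_pos Fintype.card_pos _)).ne'⟩

theorem twistedPairing_pow (n : ℕ) (x y : ℕ → R) (s t : ℕ) :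
    twistedPairing K n x y (s - t) ^ q ^ min s t =
      ∑ k ∈ Finset.range n, x k ^ q ^ s * y (n - 1 - k) ^ q ^ t := by
  rw [twistedPairing, sum_pow_card_pow]
  refine Finset.sum_congr rfl fun k _ => ?_
  rw [mul_pow, ← pow_mul, ← pow_mul, ← pow_add, ← pow_add]
  congr 3 <;> omega

theorem sum_orbitMap_mul_orbitMap (n : ℕ) (x y : ℕ → R) (i j : ℕ) :
    ∑ k ∈ Finset.range n, orbitMap K x i (x k) * orbitMap K y j (y (n - 1 - k)) =
      ∑ p ∈ Finset.range (i + 1) ×ˢ Finset.range (j + 1), orbitCoeff K x i p.1 *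
        orbitCoeff K y j p.2 * twistedPairing K n x y (p.1 - p.2) ^ q ^ min p.1 p.2 := by
  simp only [twistedPairing_pow, orbitMap_eq_sum, Finset.sum_mul_sum, ← Finset.sum_product']
  simp only [Finset.mul_sum]
  rw [Finset.sum_product, Finset.sum_comm]
  refine Finset.sum_congr rfl fun p _ => Finset.sum_congr rfl fun k _ => ?_
  ring

theorem sum_orbitMap_mul_orbitMap_eq_zero (x y : ℕ → R) (hij : i + j = n) :
    ∑ k ∈ Finset.range n, orbitMap K x i (x k) * orbitMap K y j (y (n - 1 - k)) = 0 := by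
  refine Finset.sum_eq_zero fun k hk => ?_
  have hk := Finset.mem_range.mp hk
  rcases lt_or_ge k i with h | h
  · rw [orbitMap_apply_of_lt h, zero_mul]
  · rw [orbitMap_apply_of_lt (z := y) (by omega), mul_zero]

theorem sum_orbitMap_mul_orbitMap_eq_orbitProd_mul (x y : ℕ → R) (hij : i + j + 1 = n) :
    ∑ k ∈ Finset.range n, orbitMap K x i (x k) * orbitMap K y j (y (n - 1 - k)) =
      orbitProd K x i * orbitProd K y j := by
  rw [Finset.sum_eq_single_of_mem i (Finset.mem_range.mpr (by omega)), orbitProd, orbitProd,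
    show n - 1 - i = j by omega]
  intro k hk hki
  have hk := Finset.mem_range.mp hk
  rcases lt_or_gt_of_ne hki with h | h
  · rw [orbitMap_apply_of_lt h, zero_mul]
  · rw [orbitMap_apply_of_lt (z := y) (by omega), mul_zero]

variable {S : Subalgebra K R}

theorem isWeightReducible_orbitDegree {z : ℕ → R} (hz : ∀ i < n, orbitNorm K z i ∈ S) :
    IsWeightReducible S (fun i : Fin n => z i) (fun _ => 1) (orbitDegree K n) := by
  intro i
  have hlower : orbitProd K z i - z i ^ q ^ (i : ℕ) ∈
      weightLT S (fun i : Fin n => z i) (fun _ => 1) (q ^ (i : ℕ)) := by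
    rw [orbitProd, orbitMap_eq_sum, Finset.sum_range_succ, orbitCoeff_self, one_mul,
      add_sub_cancel_right]
    refine sum_mem fun s hs => ?_
    refine Submodule.smul_mem _
      (⟨_, orbitCoeff_mem (fun j hj => hz j (hj.trans i.2)) s⟩ : S) ?_
    exact pow_mem_weightLT (g := fun i : Fin n => z i) (by
      rw [one_mul]
      exact Nat.pow_lt_pow_right Fintype.one_lt_card (Finset.mem_range.mp hs))
  have hpos : 0 < orbitDegree K n i := Nat.pos_of_neZero _
  have h := pow_mem_weightLT_of_sub_mem
    (pow_mem_weightLT (g := fun i : Fin n => z i) (by simp)) hlower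
    (k := q - 1) ⟨⟨_, hz i i.2⟩, rfl⟩ hpos
  rw [← pow_mul, mul_comm _ (q - 1)] at h
  rwa [one_mul]

theorem sum_orbitMap_mul_orbitMap_sub_mem_weightLT (hx : ∀ k < n, orbitNorm K x k ∈ S)
    (hy : ∀ k < n, orbitNorm K y k ∈ S) (hi : i < n) (hj : j < n) :
    ∑ k ∈ Finset.range n, orbitMap K x i (x k) * orbitMap K y j (y (n - 1 - k)) -
        twistedPairing K n x y (i - j) ^ q ^ min i j ∈
      weightLT S (pairingFamily K n x y)
        (fun e => pairingWeight K ((pairingIndex n e).1 - (pairingIndex n e).2))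
        (q ^ i + q ^ j) := by
  have htop : (i, j) ∈ Finset.range (i + 1) ×ˢ Finset.range (j + 1) := by simp
  have hlower := Finset.sum_erase_eq_sub (f := fun p : ℕ × ℕ => orbitCoeff K x i p.1 *
    orbitCoeff K y j p.2 * twistedPairing K n x y (p.1 - p.2) ^ q ^ min p.1 p.2) htop
  simp only [orbitCoeff_self, one_mul] at hlower
  rw [sum_orbitMap_mul_orbitMap, ← hlower]
  refine sum_mem fun p hp => ?_
  obtain ⟨⟨s, t⟩, hst, rfl⟩ : ∃ p', p' ≠ (i, j) ∧ p' = p := ⟨p, Finset.ne_of_mem_erase hp, rfl⟩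
  obtain ⟨hs, ht⟩ : s ≤ i ∧ t ≤ j := by
    simpa [Nat.lt_succ_iff] using Finset.mem_of_mem_erase hp
  refine Submodule.smul_mem _ (⟨_, mul_mem
    (orbitCoeff_mem (fun k hk => hx k (hk.trans hi)) s)
    (orbitCoeff_mem (fun k hk => hy k (hk.trans hj)) t)⟩ : S) ?_
  obtain ⟨e, he⟩ : ((s : ℤ) - t) ∈ Set.range
      fun e => ((pairingIndex n e).1 - (pairingIndex n e).2 : ℤ) := by
    rw [range_pairingIndex]
    constructor <;> omega
  rw [← he]
  refine pow_mem_weightLT (g := pairingFamily K n x y) ?_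
  dsimp only at he ⊢
  rw [he, pairingWeight_mul]
  have hq := Fintype.one_lt_card (α := K)
  have hs' := Nat.pow_le_pow_right hq.le hs
  have ht' := Nat.pow_le_pow_right hq.le ht
  rcases hs.lt_or_eq with hlt | rfl
  · exact add_lt_add_of_lt_of_le (Nat.pow_lt_pow_right hq hlt) ht'
  · exact Nat.add_lt_add_left (Nat.pow_lt_pow_right hq (ht.lt_of_ne fun h => hst (by rw [h]))) _

theorem isWeightReducible_pairingDegree (hx : ∀ k < n, orbitNorm K x k ∈ S)
    (hy : ∀ k < n, orbitNorm K y k ∈ S) :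
    IsWeightReducible S (pairingFamily K n x y)
      (fun e => pairingWeight K ((pairingIndex n e).1 - (pairingIndex n e).2))
      (pairingDegree K n) := by
  have hlower {i j : ℕ} := sum_orbitMap_mul_orbitMap_sub_mem_weightLT (i := i) (j := j) hx hy
  rintro (k | k)
  · have hk := hlower k.2 (j := n - 1 - k) (by omega)
    rw [sum_orbitMap_mul_orbitMap_eq_orbitProd_mul x y (by omega)] at hk
    have hu : pairingFamily K n x y (.inl k) ^ q ^ min (k : ℕ) (n - 1 - k) ∈
        weightLT S (pairingFamily K n x y) _ (q ^ (k : ℕ) + q ^ (n - 1 - k) + 1) :=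
      pow_mem_weightLT (w := fun e =>
        pairingWeight K ((pairingIndex n e).1 - (pairingIndex n e).2)) (by
          simp only [pairingIndex, Sum.elim_inl]
          rw [pairingWeight_mul]
          exact Nat.lt_succ_self _)
    have hred := pow_mem_weightLT_of_sub_mem hu hk (k := q - 1)
      ⟨⟨_, mul_mem (hx k k.2) (hy (n - 1 - k) (by omega))⟩, (mul_pow _ _ _).symm⟩
      (Nat.mul_pos (Nat.sub_pos_of_lt Fintype.one_lt_card)
        (Nat.add_pos_left (pow_pos Fintype.card_pos _) _))
    rw [← pow_mul, mul_comm, ← pairingWeight_mul, mul_assoc] at hred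
    exact hred
  · have hk := hlower (i := k + 1) (j := n - 1 - k) (by omega) (by omega)
    rw [sum_orbitMap_mul_orbitMap_eq_zero x y (by omega), zero_sub, neg_mem_iff,
      ← pairingWeight_mul] at hk
    exact hk

end Pairing

section Localization

variable {K : Type*} [Field K] [Fintype K] {R : Type*} [CommRing R] [Algebra K R]
  {n : ℕ} {x y : ℕ → R} {S : Subalgebra K R}

local notation "q" => Fintype.card K

/-- The multiplicative set generated by the invariants `orbitNorm K z i`, `i < n`; inverting it
makes the linear system for the dual coordinates solvable. -/
def orbitDenominators (K : Type*) [Field K] [Fintype K] {R : Type*} [CommRing R] [Algebra K R]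
    (z : ℕ → R) (n : ℕ) : Submonoid R :=
  Submonoid.closure (orbitNorm K z '' Set.Iio n)

theorem orbitDenominators_le (hx : ∀ i < n, orbitNorm K x i ∈ S) :
    orbitDenominators K x n ≤ S.toSubmonoid :=
  Submonoid.closure_le.mpr (Set.image_subset_iff.mpr hx)

theorem ne_zero_of_mem_orbitDenominators [IsDomain R] (hx : ∀ i < n, orbitProd K x i ≠ 0) {m : R}
    (hm : m ∈ orbitDenominators K x n) : m ≠ 0 := by
  have hle : orbitDenominators K x n ≤ nonZeroDivisors R := by
    refine Submonoid.closure_le.mpr (Set.image_subset_iff.mpr fun i hi => ?_)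
    exact mem_nonZeroDivisors_of_ne_zero (pow_ne_zero _ (hx i hi))
  exact nonZeroDivisors.ne_zero (hle hm)

theorem sum_orbitMap_mul_mem {i : ℕ} (hi : i < n) (hx : ∀ k < i, orbitNorm K x k ∈ S)
    (hu : ∀ i < n, twistedPairing K n x y (i : ℕ) ∈ S) :
    ∑ k ∈ Finset.range n, orbitMap K x i (x k) * y (n - 1 - k) ∈ S := by
  have hsum := sum_orbitMap_mul_orbitMap (K := K) n x y i 0
  simp only [orbitMap_zero] at hsum
  rw [hsum]
  refine sum_mem fun p hp => ?_
  obtain ⟨hs, ht⟩ : p.1 ≤ i ∧ p.2 = 0 := by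
    rw [Finset.mem_product] at hp
    simpa [Nat.lt_succ_iff] using hp
  rw [ht, orbitCoeff_self, mul_one, Nat.cast_zero, sub_zero]
  exact mul_mem (orbitCoeff_mem hx _) (pow_mem (hu _ (hs.trans_lt hi)) _)

/-- Since `orbitMap K x i` kills `x k` for `k < i`, `sum_orbitMap_mul_mem` expresses
`orbitProd K x i * y j` through the dual coordinates of smaller index. -/
theorem mem_saturation_orbitDenominators (hS : ∀ i < n, x i ∈ S)
    (hx : ∀ i < n, orbitNorm K x i ∈ S) (hu : ∀ i < n, twistedPairing K n x y (i : ℕ) ∈ S)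
    {j : ℕ} (hj : j < n) :
    y j ∈ S.saturation (orbitDenominators K x n) (orbitDenominators_le hx) := by
  induction j using Nat.strong_induction_on with
  | _ j ih =>
  obtain ⟨i, hij⟩ : ∃ i, i + j + 1 = n := ⟨n - 1 - j, by omega⟩
  have hi : i < n := by omega
  have hmap (k : ℕ) (hk : k < n) : orbitMap K x i (x k) ∈ S :=
    orbitMap_mem (fun k hk => hx k (hk.trans hi)) (hS k hk)
  have hrest : ∑ k ∈ (Finset.range n).erase i, orbitMap K x i (x k) * y (n - 1 - k) ∈
      S.saturation (orbitDenominators K x n) (orbitDenominators_le hx) := by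
    refine sum_mem fun k hk => ?_
    obtain ⟨hki, hkn⟩ : k ≠ i ∧ k < n := by simpa using hk
    rcases lt_or_gt_of_ne hki with h | h
    · rw [orbitMap_apply_of_lt h, zero_mul]
      exact zero_mem _
    · exact mul_mem (Subalgebra.le_saturation (hmap k hkn)) (ih _ (by omega) (by omega))
  have hmul : orbitProd K x i * y j ∈
      S.saturation (orbitDenominators K x n) (orbitDenominators_le hx) := by
    have hsum := sum_orbitMap_mul_mem hi (fun k hk => hx k (hk.trans hi)) hu
    have h := sub_mem (Subalgebra.le_saturation hsum) hrest
    rwa [← Finset.add_sum_erase _ _ (Finset.mem_range.mpr hi), add_sub_cancel_right,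
      show n - 1 - i = j by omega] at h
  refine Subalgebra.mem_saturation_of_mul_mem_left (x := orbitNorm K x i) ?_
    (Submonoid.subset_closure ⟨i, hi, rfl⟩)
  have hq : q - 1 = q - 2 + 1 := by
    have := Fintype.one_lt_card (α := K)
    omega
  rw [orbitNorm, hq, pow_succ, mul_assoc]
  exact mul_mem (pow_mem (Subalgebra.le_saturation (hmap i hi)) _) hmul

theorem exists_mem_orbitDenominators_mul_mem
    (hgen : Algebra.adjoin K (Set.range (Sum.elim (fun i : Fin n => x i) fun i : Fin n => y i)) = ⊤)
    (hS : ∀ i < n, x i ∈ S) (hx : ∀ i < n, orbitNorm K x i ∈ S)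
    (hu : ∀ i < n, twistedPairing K n x y (i : ℕ) ∈ S) (r : R) :
    ∃ m ∈ orbitDenominators K x n, m * r ∈ S := by
  have hle : Algebra.adjoin K (Set.range (Sum.elim (fun i : Fin n => x i) fun i : Fin n => y i)) ≤
      S.saturation (orbitDenominators K x n) (orbitDenominators_le hx) := by
    refine Algebra.adjoin_le (Set.range_subset_iff.mpr ?_)
    rintro (i | j)
    · exact Subalgebra.le_saturation (hS i i.2)
    · exact mem_saturation_orbitDenominators hS hx hu j.2
  exact hle (hgen ▸ Algebra.mem_top)

variable [IsDomain R]

theorem IsWeightReducible.spansUpToDenominators {ι : Type*} [Fintype ι] {g : ι → R} {w d : ι → ℕ}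
    (hg : IsWeightReducible S g w d) (hx : ∀ i < n, orbitNorm K x i ∈ S)
    (hx0 : ∀ i < n, orbitProd K x i ≠ 0)
    (hloc : ∀ r, ∃ m ∈ orbitDenominators K x n, m * r ∈ S ⊔ Algebra.adjoin K (Set.range g)) :
    SpansUpToDenominators S (reducedMonomial g d) := by
  intro r
  obtain ⟨m, hm, hmr⟩ := hloc r
  refine ⟨⟨m, orbitDenominators_le hx hm⟩, ?_, hg.mem_span_of_mem_sup hmr⟩
  exact Subtype.coe_ne_coe.mp (ne_zero_of_mem_orbitDenominators hx0 hm)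

variable {T : Set (R →ₐ[K] R)}

theorem exists_mem_orbitDenominators_mul_mem_of_mem_fixedSubalgebra
    (hgen : Algebra.adjoin K (Set.range (Sum.elim (fun i : Fin n => x i) fun i : Fin n => y i)) = ⊤)
    (hx0 : ∀ i < n, orbitProd K x i ≠ 0) (hx : ∀ i < n, orbitNorm K x i ∈ S)
    (hu : ∀ i < n, twistedPairing K n x y (i : ℕ) ∈ S)
    (hS : S ≤ fixedSubalgebra T) (hT : T.ncard = ∏ i, orbitDegree K n i) {p : R}
    (hp : p ∈ fixedSubalgebra T) : ∃ m ∈ orbitDenominators K x n, m * p ∈ S := by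
  have hred := isWeightReducible_orbitDegree hx
  have hsup := le_sup_right (a := S) (b := Algebra.adjoin K (Set.range fun i : Fin n => x i))
  have hloc := exists_mem_orbitDenominators_mul_mem hgen
    (fun i hi => hsup (Algebra.subset_adjoin ⟨⟨i, hi⟩, rfl⟩))
    (fun i hi => le_sup_left (a := S) (hx i hi)) (fun i hi => le_sup_left (a := S) (hu i hi))
  obtain ⟨m, hm, hmp⟩ := hloc p
  exact ⟨m, hm, (hred.spansUpToDenominators hx hx0 hloc).mem_of_mem_fixedSubalgebra hS
    (by simpa using hT) (reducedMonomial_zero _ _)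
    (mul_mem (hS (orbitDenominators_le hx hm)) hp) (hred.mem_span_of_mem_sup hmp)⟩

theorem fixedSubalgebra_le_of_ncard_eq
    (hgen : Algebra.adjoin K (Set.range (Sum.elim (fun i : Fin n => x i) fun i : Fin n => y i)) = ⊤)
    (hx : ∀ i < n, orbitNorm K x i ∈ S) (hy : ∀ i < n, orbitNorm K y i ∈ S)
    (hS : S ≤ fixedSubalgebra T) (hT : T.ncard = (∏ i, orbitDegree K n i) ^ 2) :
    fixedSubalgebra T ≤ S := by
  have hred := (isWeightReducible_orbitDegree hx).sumElim (isWeightReducible_orbitDegree hy)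
  have hspan (r : R) := hred.mem_span_of_mem_sup (r := r)
    (le_sup_right (a := S) (hgen ▸ Algebra.mem_top))
  have : ∀ i, NeZero (Sum.elim (orbitDegree K n) (orbitDegree K n) i) := by
    rintro (i | i) <;> exact inferInstanceAs (NeZero (orbitDegree K n i))
  have hz : SpansUpToDenominators S (reducedMonomial
      (Sum.elim (fun i : Fin n => x i) fun i : Fin n => y i)
      (Sum.elim (orbitDegree K n) (orbitDegree K n))) :=
    fun r => ⟨1, one_ne_zero, (one_smul S r).symm ▸ hspan r⟩
  exact fun p hp => hz.mem_of_mem_fixedSubalgebra hS (by simpa [sq] using hT)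
    (reducedMonomial_zero _ _) hp (hspan p)

theorem linearIndependent_reducedMonomial_pairingFamily
    (hgen : Algebra.adjoin K (Set.range (Sum.elim (fun i : Fin n => x i) fun i : Fin n => y i)) = ⊤)
    (hx0 : ∀ i < n, orbitProd K x i ≠ 0)
    (hx : ∀ i < n, orbitNorm K x i ∈ S) (hy : ∀ i < n, orbitNorm K y i ∈ S)
    (hS : S ≤ fixedSubalgebra T) (hT : T.ncard = (∏ i, orbitDegree K n i) ^ 2) :
    LinearIndependent S (reducedMonomial (pairingFamily K n x y) (pairingDegree K n)) := by
  have hred := (isWeightReducible_orbitDegree hx).sumElim (isWeightReducible_pairingDegree hx hy)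
  have hsup := le_sup_right (a := S) (b := Algebra.adjoin K (Set.range
    (Sum.elim (fun i : Fin n => x i) (pairingFamily K n x y))))
  have hloc := exists_mem_orbitDenominators_mul_mem hgen
    (fun i hi => hsup (Algebra.subset_adjoin ⟨.inl ⟨i, hi⟩, rfl⟩))
    (fun i hi => le_sup_left (a := S) (hx i hi)) (fun i hi => by
      refine hsup (Algebra.subset_adjoin ?_)
      rw [Set.Sum.elim_range, range_pairingFamily]
      exact .inr ⟨i, by constructor <;> omega, rfl⟩)
  have hcard : T.ncard =
      Nat.card (∀ i, Fin (Sum.elim (orbitDegree K n) (pairingDegree K n) i)) := by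
    rw [hT, Nat.card_pi, Fintype.prod_sum_type, sq]
    simp only [Nat.card_eq_fintype_card, Fintype.card_fin, Sum.elim_inl, Sum.elim_inr]
    rw [prod_pairingDegree]
  have hli := (hred.spansUpToDenominators hx hx0 hloc).linearIndependent_of_le hS hcard
  let extend (e : ∀ i, Fin (pairingDegree K n i)) (i : Fin n ⊕ (Fin n ⊕ Fin (n - 1))) :
      Fin (Sum.elim (orbitDegree K n) (pairingDegree K n) i) :=
    Sum.rec (fun i => (0 : Fin (orbitDegree K n i))) e i
  have hextend : reducedMonomial (pairingFamily K n x y) (pairingDegree K n) =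
      reducedMonomial (Sum.elim (fun i : Fin n => x i) (pairingFamily K n x y)) _ ∘ extend := by
    ext e
    exact ((reducedMonomial_sumElim ..).trans ((congrArg (· * _) (reducedMonomial_zero ..)).trans
      (one_mul _))).symm
  rw [hextend]
  exact hli.comp extend fun e e' h => funext fun i => congrFun h (.inr i)

end Localization

section Gluing

theorem mem_span_of_mul_mem_span_of_isRelPrime {k R I : Type*} [CommRing k] [CommRing R]
    [IsDomain R] [DecompositionMonoid R] [Algebra k R] [Finite I] {S : Subalgebra k R} {v : I → R}
    (hv : LinearIndependent S v) {a b p : R} (ha : a ∈ S) (hb : b ∈ S) (ha0 : a ≠ 0)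
    (hab : IsRelPrime a b) (hS : ∀ r, a * r ∈ S → r ∈ S)
    (hap : a * p ∈ Submodule.span S (Set.range v)) (hbp : b * p ∈ Submodule.span S (Set.range v)) :
    p ∈ Submodule.span S (Set.range v) := by
  have := Fintype.ofFinite I
  obtain ⟨c, hc⟩ := (Submodule.mem_span_range_iff_exists_fun S).mp hap
  obtain ⟨d, hd⟩ := (Submodule.mem_span_range_iff_exists_fun S).mp hbp
  have hcd (i : I) : b * c i = a * d i := by
    have h := Fintype.linearIndependent_iffₛ.mp hv (fun i => ⟨b, hb⟩ * c i) (fun i => ⟨a, ha⟩ * d i)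
      (by
        simp only [mul_smul, ← Finset.smul_sum, hc, hd]
        simp only [Subalgebra.smul_def, smul_eq_mul]
        exact mul_left_comm b a p) i
    exact congrArg Subtype.val h
  choose r hr using fun i => hab.dvd_of_dvd_mul_left ⟨d i, hcd i⟩
  have hrS (i : I) : r i ∈ S := hS _ (hr i ▸ (c i).2)
  have hp : p = ∑ i, (⟨r i, hrS i⟩ : S) • v i := by
    apply mul_left_cancel₀ ha0
    rw [← hc, Finset.mul_sum]
    exact Finset.sum_congr rfl fun i _ => by
      rw [Subalgebra.smul_def, Subalgebra.smul_def, hr, smul_eq_mul, smul_eq_mul, mul_assoc]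
  exact (Submodule.mem_span_range_iff_exists_fun S).mpr ⟨_, hp.symm⟩

theorem mem_sup_adjoin_of_mem_span_reducedMonomial {k R ι : Type*} [CommRing k] [CommRing R]
    [Algebra k R] [Fintype ι] (S : Subalgebra k R) (g : ι → R) (d : ι → ℕ) {r : R}
    (hr : r ∈ Submodule.span S (Set.range (reducedMonomial g d))) :
    r ∈ S ⊔ Algebra.adjoin k (Set.range g) := by
  induction hr using Submodule.span_induction with
  | mem r hr =>
    obtain ⟨e, rfl⟩ := hr
    have hg (i : ι) : g i ∈ S ⊔ Algebra.adjoin k (Set.range g) :=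
      le_sup_right (a := S) (Algebra.subset_adjoin (Set.mem_range_self i))
    exact prod_mem fun i _ => pow_mem (hg i) _
  | zero => exact zero_mem _
  | add r r' _ _ hr hr' => exact add_mem hr hr'
  | smul s r _ hr => exact mul_mem (le_sup_left (a := S) s.2) hr

theorem fixedSubalgebra_le_sup_adjoin_pairingFamily {K R : Type*} [Field K] [Fintype K]
    [CommRing R] [IsDomain R] [DecompositionMonoid R] [Algebra K R] {n : ℕ} {x y : ℕ → R}
    (hgen : Algebra.adjoin K (Set.range (Sum.elim (fun i : Fin n => x i) fun i : Fin n => y i)) = ⊤)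
    (hx0 : ∀ i < n, orbitProd K x i ≠ 0) (hy0 : ∀ i < n, orbitProd K y i ≠ 0)
    (hxy : ∀ a ∈ orbitDenominators K x n, ∀ b ∈ orbitDenominators K y n, IsRelPrime a b)
    {S : Subalgebra K R} (hx : ∀ i < n, orbitNorm K x i ∈ S) (hy : ∀ i < n, orbitNorm K y i ∈ S)
    {T₁ T₂ : Set (R →ₐ[K] R)} (hT₁ : T₁.ncard = ∏ i, orbitDegree K n i)
    (hS₁ : S ⊔ Algebra.adjoin K (Set.range (pairingFamily K n x y)) ≤ fixedSubalgebra T₁)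
    (hT₂ : T₂.ncard = (∏ i, orbitDegree K n i) ^ 2) (hS₂ : S ≤ fixedSubalgebra T₂) :
    fixedSubalgebra T₁ ≤ S ⊔ Algebra.adjoin K (Set.range (pairingFamily K n x y)) := by
  intro p hp
  have hSA := le_sup_left (a := S) (b := Algebra.adjoin K (Set.range (pairingFamily K n x y)))
  have hu (m : ℤ) (hm : m ∈ Set.Icc (1 - (n : ℤ)) (n - 1)) : twistedPairing K n x y m ∈
      S ⊔ Algebra.adjoin K (Set.range (pairingFamily K n x y)) :=
    le_sup_right (a := S) <| Algebra.subset_adjoin <| by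
      rw [range_pairingFamily]
      exact ⟨m, hm, rfl⟩
  obtain ⟨a, ha, hap⟩ := exists_mem_orbitDenominators_mul_mem_of_mem_fixedSubalgebra hgen hx0
    (fun i hi => hSA (hx i hi)) (fun i hi => hu i ⟨by omega, by omega⟩) hS₁ hT₁ hp
  obtain ⟨b, hb, hbp⟩ := exists_mem_orbitDenominators_mul_mem_of_mem_fixedSubalgebra
    (x := y) (y := x) (by rwa [Set.Sum.elim_range, Set.union_comm, ← Set.Sum.elim_range]) hy0
    (fun i hi => hSA (hy i hi))
    (fun i hi => twistedPairing_comm (K := K) n y x i ▸ hu _ ⟨by omega, by omega⟩) hS₁ hT₁ hp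
  have haS := orbitDenominators_le hx ha
  have ha0 := ne_zero_of_mem_orbitDenominators hx0 ha
  have hred := isWeightReducible_pairingDegree hx hy
  refine mem_sup_adjoin_of_mem_span_reducedMonomial _ _ _ <| mem_span_of_mul_mem_span_of_isRelPrime
    (linearIndependent_reducedMonomial_pairingFamily hgen hx0 hx hy hS₂ hT₂) haS
    (orbitDenominators_le hy hb) ha0 (hxy a ha b hb) (fun r hr => ?_)
    (hred.mem_span_of_mem_sup hap) (hred.mem_span_of_mem_sup hbp)
  exact fixedSubalgebra_le_of_ncard_eq hgen hx hy hS₂ hT₂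
    (mem_fixedSubalgebra_of_mul_mem ha0 (hS₂ haS) (hS₂ hr))

end Gluing

section Coordinates

variable {K : Type*} [Field K] {σ : Type*} {n : ℕ}

theorem notMem_vars_of_dvd_of_mem_supported {R : Type*} [CommRing R] [IsDomain R] {s : Set σ}
    {c d : MvPolynomial σ R} (hd : d ≠ 0) (hds : d ∈ supported R s) (hcd : c ∣ d) {i : σ}
    (hi : i ∉ s) : i ∉ c.vars := by
  obtain ⟨e, rfl⟩ := hcd
  have hce : i ∉ (c * e).vars := fun h => hi (mem_supported.mp hds h)
  rw [mem_vars_iff_degreeOf_ne_zero, not_not] at hce ⊢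
  rw [degreeOf_mul_eq (left_ne_zero_of_mul hd) (right_ne_zero_of_mul hd)] at hce
  omega

theorem isRelPrime_of_mem_supported {s t : Set σ} (hst : Disjoint s t)
    {a b : MvPolynomial σ K} (ha : a ≠ 0) (hb : b ≠ 0) (has : a ∈ supported K s)
    (hbt : b ∈ supported K t) : IsRelPrime a b := by
  intro c hca hcb
  have hvars : c.vars = ∅ := by
    refine Finset.eq_empty_of_forall_notMem fun i => ?_
    by_cases hi : i ∈ s
    · exact notMem_vars_of_dvd_of_mem_supported hb hbt hcb (hst.notMem_of_mem_left hi)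
    · exact notMem_vars_of_dvd_of_mem_supported ha has hca hi
  have hc := vars_eq_empty_iff_eq_C.mp hvars
  refine hc ▸ (isUnit_iff_ne_zero.mpr fun h => ne_zero_of_dvd_ne_zero ha hca ?_).map C
  rw [hc, h, C_0]

/-- The variables `X (v 0), …, X (v (n - 1))` as a sequence, with junk value `0` from index `n`
on. -/
noncomputable def coordSeq (K : Type*) [CommSemiring K] (v : Fin n → σ) (k : ℕ) :
    MvPolynomial σ K :=
  if h : k < n then X (v ⟨k, h⟩) else 0

theorem coordSeq_val (v : Fin n → σ) (i : Fin n) : coordSeq K v i = X (v i) :=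
  dif_pos i.2

theorem coordSeq_mem_supported (v : Fin n → σ) {s : Set (Fin n)} {k : ℕ}
    (hk : ∀ i : Fin n, (i : ℕ) = k → i ∈ s) : coordSeq K v k ∈ supported K (v '' s) := by
  unfold coordSeq
  split_ifs with h
  · exact X_mem_supported.mpr (Set.mem_image_of_mem v (hk ⟨k, h⟩ rfl))
  · exact zero_mem _

theorem isTriangularOn_coordSeq {v : Fin n → σ} {M : Matrix (Fin n) (Fin n) K}
    (hM : M.IsUpperTriangular) (hdiag : ∀ i, M i i ≠ 0)
    {τ : MvPolynomial σ K →ₐ[K] MvPolynomial σ K}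
    (hτ : ∀ j, τ (X (v j)) = ∑ i, C (M i j) * X (v i)) : IsTriangularOn (coordSeq K v) n τ := by
  intro j hj
  lift j to Fin n using hj
  refine ⟨M j j, hdiag j, ?_⟩
  rw [coordSeq_val, hτ, Fintype.sum_eq_add_sum_compl j, ← smul_eq_C_mul, add_sub_cancel_left]
  refine sum_mem fun i hi => ?_
  rw [← smul_eq_C_mul]
  rcases lt_or_gt_of_ne (Finset.mem_compl.mp hi ∘ Finset.mem_singleton.mpr) with hij | hij
  · exact Submodule.smul_mem _ _ (Submodule.subset_span ⟨i, hij, coordSeq_val v i⟩)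
  · rw [hM hij, zero_smul]
    exact zero_mem _

variable [Fintype K]

theorem orbitProd_coordSeq_ne_zero {v : Fin n → σ} (hv : Function.Injective v) (i : Fin n) :
    orbitProd K (coordSeq K v) i ≠ 0 := by
  refine orbitProd_ne_zero fun h => ?_
  have hspan : Submodule.span K (coordSeq K v '' Set.Iio (i : ℕ)) ≤
      (supported K (v '' Set.Iio i)).toSubmodule := by
    refine Submodule.span_le.mpr ?_
    rintro _ ⟨j, hj, rfl⟩
    exact coordSeq_mem_supported v fun k hk => Fin.lt_def.mpr (hk ▸ hj)
  have hmem := hspan h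
  rw [coordSeq_val, Subalgebra.mem_toSubmodule, X_mem_supported, hv.mem_set_image] at hmem
  exact lt_irrefl i hmem

theorem orbitProd_coordSeq (v : Fin n → σ) (i : Fin n) : orbitProd K (coordSeq K v) i =
    ∏ α : Fin i → K, (X (v i) + ∑ j, C (α j) * X (v ⟨j, j.2.trans i.2⟩)) := by
  have hval (j : Fin i) : coordSeq K v j = X (v ⟨j, j.2.trans i.2⟩) :=
    coordSeq_val v ⟨j, j.2.trans i.2⟩
  simp only [orbitProd, orbitMap_eq_prod, coordSeq_val, hval, smul_eq_C_mul]

theorem orbitNorm_coordSeq_mem_supported (v : Fin n → σ) (k : ℕ) :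
    orbitNorm K (coordSeq K v) k ∈ supported K (Set.range v) := by
  have hmem (j : ℕ) : coordSeq K v j ∈ supported K (Set.range v) := by
    rw [← Set.image_univ]
    exact coordSeq_mem_supported v fun _ _ => Set.mem_univ _
  have hprod : orbitProd K (coordSeq K v) k ∈ supported K (Set.range v) := by
    rw [orbitProd, orbitMap_eq_prod]
    exact prod_mem fun α _ => add_mem (hmem k) (sum_mem fun j _ =>
      Subalgebra.smul_mem _ (hmem j) _)
  exact pow_mem hprod _

theorem isRelPrime_of_mem_orbitDenominators {m : ℕ} {v : Fin n → σ} {w : Fin m → σ}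
    (hv : Function.Injective v) (hw : Function.Injective w)
    (hvw : Disjoint (Set.range v) (Set.range w)) {a b : MvPolynomial σ K}
    (ha : a ∈ orbitDenominators K (coordSeq K v) n)
    (hb : b ∈ orbitDenominators K (coordSeq K w) m) : IsRelPrime a b :=
  isRelPrime_of_mem_supported hvw
    (ne_zero_of_mem_orbitDenominators (fun i hi => orbitProd_coordSeq_ne_zero hv ⟨i, hi⟩) ha)
    (ne_zero_of_mem_orbitDenominators (fun i hi => orbitProd_coordSeq_ne_zero hw ⟨i, hi⟩) hb)
    (orbitDenominators_le (fun i _ => orbitNorm_coordSeq_mem_supported v i) ha)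
    (orbitDenominators_le (fun i _ => orbitNorm_coordSeq_mem_supported w i) hb)

end Coordinates

section TriangularMatrices

variable {K : Type*} [Field K] {n : ℕ}

theorem apply_self_ne_zero_of_isUpperTriangular {σ : GL (Fin n) K}
    (hσ : σ.val.IsUpperTriangular) (i : Fin n) : σ.val i i ≠ 0 := by
  have hdet := σ.isUnit.map Matrix.detMonoidHom
  rw [Matrix.coe_detMonoidHom, Matrix.det_of_isUpperTriangular hσ] at hdet
  exact Finset.prod_ne_zero_iff.mp hdet.ne_zero i (Finset.mem_univ i)

theorem isUpperTriangular_inv {σ : GL (Fin n) K} (hσ : σ.val.IsUpperTriangular) :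
    (σ⁻¹).val.IsUpperTriangular := by
  have := σ.invertible
  rw [Matrix.coe_units_inv]
  exact Matrix.blockTriangular_inv_of_blockTriangular hσ

/-- The group `B_n`, as a set. -/
def upperTriangularGL (K : Type*) [Field K] (n : ℕ) : Set (GL (Fin n) K) :=
  {σ | σ.val.IsUpperTriangular}

/-- The upper triangular matrix with `i`-th column
`(β i).2 0, …, (β i).2 (i - 1), (β i).1, 0, …, 0`. -/
def triangularMatrix (β : ∀ i : Fin n, Kˣ × (Fin i → K)) : Matrix (Fin n) (Fin n) K :=
  .of fun j i => if h : j < i then (β i).2 ⟨j, h⟩ else if j = i then (β i).1 else 0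

theorem isUpperTriangular_triangularMatrix (β : ∀ i : Fin n, Kˣ × (Fin i → K)) :
    (triangularMatrix β).IsUpperTriangular := by
  intro i j hji
  have hji : j < i := hji
  simp [triangularMatrix, hji.not_gt, hji.ne']

theorem det_triangularMatrix_ne_zero (β : ∀ i : Fin n, Kˣ × (Fin i → K)) :
    (triangularMatrix β).det ≠ 0 := by
  rw [Matrix.det_of_isUpperTriangular (isUpperTriangular_triangularMatrix β)]
  exact Finset.prod_ne_zero_iff.mpr fun i _ => by simp [triangularMatrix]

theorem triangularMatrix_injective : Function.Injective (triangularMatrix (K := K) (n := n)) := by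
  intro β γ h
  refine funext fun i => Prod.ext (Units.ext ?_) (funext fun j => ?_)
  · simpa [triangularMatrix] using congrFun₂ h i i
  · have hj : (⟨j, j.2.trans i.2⟩ : Fin n) < i := j.2
    simpa only [triangularMatrix, of_apply, dif_pos hj] using congrFun₂ h ⟨j, j.2.trans i.2⟩ i

theorem exists_triangularMatrix_eq {σ : GL (Fin n) K} (hσ : σ.val.IsUpperTriangular) :
    ∃ β, triangularMatrix β = σ.val := by
  refine ⟨fun i => (Units.mk0 _ (apply_self_ne_zero_of_isUpperTriangular hσ i),
    fun j => σ.val ⟨j, j.2.trans i.2⟩ i), ?_⟩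
  ext j i
  rcases lt_trichotomy j i with h | rfl | h
  · simp [triangularMatrix, h]
  · simp [triangularMatrix]
  · rw [hσ h]
    simp [triangularMatrix, h.not_gt, h.ne']

theorem ncard_upperTriangularGL [Fintype K] :
    (upperTriangularGL K n).ncard = ∏ i, orbitDegree K n i := by
  have himage : Units.val '' upperTriangularGL K n = Set.range triangularMatrix := by
    ext M
    constructor
    · rintro ⟨σ, hσ, rfl⟩
      exact exists_triangularMatrix_eq hσ
    · rintro ⟨β, rfl⟩
      exact ⟨Matrix.GeneralLinearGroup.mkOfDetNeZero _ (det_triangularMatrix_ne_zero β),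
        isUpperTriangular_triangularMatrix β, rfl⟩
  rw [← Set.ncard_image_of_injective _ Units.val_injective, himage, ← Nat.card_coe_set_eq,
    Nat.card_range_of_injective triangularMatrix_injective, Nat.card_pi]
  refine Finset.prod_congr rfl fun i _ => ?_
  rw [Nat.card_prod, Nat.card_fun, Nat.card_units]
  simp [orbitDegree]

end TriangularMatrices

section Action

variable {K : Type*} [Field K] {n : ℕ}

/-- The variant of `gact` in which `σ` acts on the `x_j` and `τ` acts on the `y_j`. -/
noncomputable def biact (σ τ : GL (Fin n) K) :
    MvPolynomial (Fin n ⊕ Fin n) K →ₐ[K] MvPolynomial (Fin n ⊕ Fin n) K :=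
  aeval (Sum.elim (fun j => ∑ i, C (σ.val i j) * X (Sum.inl i))
    fun j => ∑ i, C ((τ⁻¹).val j i) * X (Sum.inr i))

/-- The sequence `x_1, …, x_n`. -/
noncomputable def xSeq (K : Type*) [Field K] (n : ℕ) : ℕ → MvPolynomial (Fin n ⊕ Fin n) K :=
  coordSeq K Sum.inl

/-- The sequence `y_n, …, y_1`, in this order because its initial segments span the flag that `B_n`
preserves. -/
noncomputable def ySeq (K : Type*) [Field K] (n : ℕ) : ℕ → MvPolynomial (Fin n ⊕ Fin n) K :=
  coordSeq K (Sum.inr ∘ Fin.rev)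

theorem adjoin_xSeq_ySeq : Algebra.adjoin K
    (Set.range (Sum.elim (fun i : Fin n => xSeq K n i) fun i : Fin n => ySeq K n i)) = ⊤ := by
  rw [eq_top_iff, ← adjoin_range_X]
  refine Algebra.adjoin_mono ?_
  rintro _ ⟨i | i, rfl⟩
  · exact ⟨.inl i, coordSeq_val _ i⟩
  · exact ⟨.inr i.rev, (coordSeq_val _ i.rev).trans (by simp)⟩

theorem biact_X_inl (σ τ : GL (Fin n) K) (j : Fin n) :
    biact σ τ (X (Sum.inl j)) = ∑ i, C (σ.val i j) * X (Sum.inl i) := by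
  simp [biact]

theorem biact_X_inr (σ τ : GL (Fin n) K) (j : Fin n) :
    biact σ τ (X (Sum.inr j)) = ∑ i, C ((τ⁻¹).val j i) * X (Sum.inr i) := by
  simp [biact]

theorem biact_injective :
    Function.Injective fun g : GL (Fin n) K × GL (Fin n) K => biact g.1 g.2 := by
  rintro ⟨σ, τ⟩ ⟨σ', τ'⟩ h
  have heval (a b : Fin n → K) (i : Fin n ⊕ Fin n) :
      eval (Sum.elim a b) (biact σ τ (X i)) = eval (Sum.elim a b) (biact σ' τ' (X i)) :=
    congrArg _ (DFunLike.congr_fun h (X i))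
  refine Prod.ext (Units.ext ?_) (inv_injective (Units.ext ?_)) <;> ext i j
  · simpa [biact_X_inl, Pi.single_apply] using heval (Pi.single i 1) 0 (Sum.inl j)
  · simpa [biact_X_inr, Pi.single_apply] using heval 0 (Pi.single j 1) (Sum.inr i)

theorem isTriangularOn_xSeq_biact {σ : GL (Fin n) K} (hσ : σ ∈ upperTriangularGL K n)
    (τ : GL (Fin n) K) : IsTriangularOn (xSeq K n) n (biact σ τ) :=
  isTriangularOn_coordSeq hσ (apply_self_ne_zero_of_isUpperTriangular hσ) (biact_X_inl σ τ)

theorem isTriangularOn_ySeq_biact (σ : GL (Fin n) K) {τ : GL (Fin n) K}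
    (hτ : τ ∈ upperTriangularGL K n) : IsTriangularOn (ySeq K n) n (biact σ τ) := by
  refine isTriangularOn_coordSeq (M := (τ⁻¹).valᵀ.submatrix Fin.rev Fin.rev)
    (fun i j hji => isUpperTriangular_inv hτ (Fin.rev_lt_rev.mpr hji))
    (fun i => apply_self_ne_zero_of_isUpperTriangular (isUpperTriangular_inv hτ) i.rev) fun j => ?_
  rw [Function.comp_apply, biact_X_inr]
  exact (Equiv.sum_comp Fin.revPerm _).symm

variable [Fintype K]

theorem twistedPairing_xSeq_ySeq (m : ℤ) :
    twistedPairing K n (xSeq K n) (ySeq K n) m =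
      ∑ k, X (Sum.inl k) ^ Fintype.card K ^ m.toNat *
        X (Sum.inr k) ^ Fintype.card K ^ (-m).toNat := by
  rw [twistedPairing, Finset.sum_range]
  refine Finset.sum_congr rfl fun k _ => ?_
  have hk : n - 1 - (k : ℕ) = k.rev := by rw [Fin.val_rev]; omega
  rw [hk, xSeq, ySeq, coordSeq_val, coordSeq_val, Function.comp_apply, Fin.rev_rev]

theorem biact_twistedPairing (σ : GL (Fin n) K) (m : ℤ) :
    biact σ σ (twistedPairing K n (xSeq K n) (ySeq K n) m) =
      twistedPairing K n (xSeq K n) (ySeq K n) m := by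
  let x (k : Fin n) : MvPolynomial (Fin n ⊕ Fin n) K := X (Sum.inl k) ^ Fintype.card K ^ m.toNat
  let y (k : Fin n) : MvPolynomial (Fin n ⊕ Fin n) K := X (Sum.inr k) ^ Fintype.card K ^ (-m).toNat
  have hx (k : Fin n) : biact σ σ (x k) = (x ᵥ* σ.val.map C) k := by
    simp only [x, map_pow, biact_X_inl, sum_pow_card_pow, mul_pow, ← C_pow,
      FiniteField.pow_card_pow, vecMul, dotProduct, map_apply, mul_comm]
  have hy (k : Fin n) : biact σ σ (y k) = ((σ⁻¹).val.map C *ᵥ y) k := by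
    simp only [y, map_pow, biact_X_inr, sum_pow_card_pow, mul_pow, ← C_pow,
      FiniteField.pow_card_pow, mulVec, dotProduct, map_apply]
  rw [twistedPairing_xSeq_ySeq, map_sum]
  calc ∑ k, biact σ σ (x k * y k) = x ᵥ* σ.val.map C ⬝ᵥ (σ⁻¹).val.map C *ᵥ y := by
        simp only [map_mul, hx, hy, dotProduct]
    _ = x ⬝ᵥ y := by
        rw [dotProduct_mulVec, vecMul_vecMul, ← Matrix.map_mul, Units.mul_inv,
          Matrix.map_one _ C_0 C_1, vecMul_one]

/-- The subalgebra generated by the invariants `f̃_i` and `f̃_i^*`. -/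
noncomputable def normSubalgebra (K : Type*) [Field K] [Fintype K] (n : ℕ) :
    Subalgebra K (MvPolynomial (Fin n ⊕ Fin n) K) :=
  Algebra.adjoin K ((Set.range fun i : Fin n => orbitNorm K (xSeq K n) i) ∪
    Set.range fun i : Fin n => orbitNorm K (ySeq K n) i)

theorem orbitNorm_xSeq_mem_normSubalgebra {i : ℕ} (hi : i < n) :
    orbitNorm K (xSeq K n) i ∈ normSubalgebra K n :=
  Algebra.subset_adjoin (Or.inl ⟨⟨i, hi⟩, rfl⟩)

theorem orbitNorm_ySeq_mem_normSubalgebra {i : ℕ} (hi : i < n) :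
    orbitNorm K (ySeq K n) i ∈ normSubalgebra K n :=
  Algebra.subset_adjoin (Or.inr ⟨⟨i, hi⟩, rfl⟩)

theorem normSubalgebra_le_fixedSubalgebra : normSubalgebra K n ≤ fixedSubalgebra
    ((fun g => biact g.1 g.2) '' upperTriangularGL K n ×ˢ upperTriangularGL K n) := by
  refine Algebra.adjoin_le ?_
  rintro _ (⟨i, rfl⟩ | ⟨i, rfl⟩) <;> refine mem_fixedSubalgebra.mpr ?_ <;>
    rintro _ ⟨g, hg, rfl⟩
  · exact (isTriangularOn_xSeq_biact hg.1 g.2).map_orbitNorm i.2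
  · exact (isTriangularOn_ySeq_biact g.1 hg.2).map_orbitNorm i.2

theorem normSubalgebra_sup_adjoin_le_fixedSubalgebra :
    normSubalgebra K n ⊔ Algebra.adjoin K (Set.range (pairingFamily K n (xSeq K n) (ySeq K n))) ≤
      fixedSubalgebra ((fun σ => biact σ σ) '' upperTriangularGL K n) := by
  refine sup_le (fun r hr => mem_fixedSubalgebra.mpr ?_) (Algebra.adjoin_le ?_)
  · rintro _ ⟨σ, hσ, rfl⟩
    exact mem_fixedSubalgebra.mp (normSubalgebra_le_fixedSubalgebra hr) _ ⟨(σ, σ), ⟨hσ, hσ⟩, rfl⟩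
  · rintro _ ⟨e, rfl⟩
    refine mem_fixedSubalgebra.mpr ?_
    rintro _ ⟨σ, -, rfl⟩
    exact biact_twistedPairing σ _

theorem fixedSubalgebra_biact_eq : fixedSubalgebra
    ((fun σ => biact σ σ) '' upperTriangularGL K n) =
      normSubalgebra K n ⊔
        Algebra.adjoin K (Set.range (pairingFamily K n (xSeq K n) (ySeq K n))) := by
  have hdiag : Function.Injective fun σ : GL (Fin n) K => biact σ σ :=
    biact_injective.comp (f := fun σ => (σ, σ)) fun _ _ h => congrArg Prod.fst h
  have hrev : Function.Injective (Sum.inr ∘ Fin.rev : Fin n → Fin n ⊕ Fin n) :=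
    Sum.inr_injective.comp Fin.rev_injective
  have hdisj : Disjoint (Set.range (Sum.inl : Fin n → Fin n ⊕ Fin n))
      (Set.range (Sum.inr ∘ Fin.rev)) :=
    Set.isCompl_range_inl_range_inr.disjoint.mono_right (Set.range_comp_subset_range _ _)
  refine le_antisymm (fixedSubalgebra_le_sup_adjoin_pairingFamily adjoin_xSeq_ySeq
    (fun i hi => orbitProd_coordSeq_ne_zero Sum.inl_injective ⟨i, hi⟩)
    (fun i hi => orbitProd_coordSeq_ne_zero hrev ⟨i, hi⟩)
    (fun a ha b hb => isRelPrime_of_mem_orbitDenominators Sum.inl_injective hrev hdisj ha hb)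
    (fun i => orbitNorm_xSeq_mem_normSubalgebra) (fun i => orbitNorm_ySeq_mem_normSubalgebra)
    ?_ normSubalgebra_sup_adjoin_le_fixedSubalgebra ?_ normSubalgebra_le_fixedSubalgebra)
    normSubalgebra_sup_adjoin_le_fixedSubalgebra
  · rw [Set.ncard_image_of_injective _ hdiag, ncard_upperTriangularGL]
  · rw [Set.ncard_image_of_injective _ biact_injective, Set.ncard_prod, ncard_upperTriangularGL, sq]

end Action

section Statement

variable {F n}

theorem fX_succ (i : Fin n) : fX F n (i + 1) = orbitProd F (xSeq F n) i :=
  (dif_pos ⟨Nat.succ_pos i, i.2⟩).trans (orbitProd_coordSeq Sum.inl i).symm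

theorem fY_succ (i : Fin n) : fY F n (i + 1) = orbitProd F (ySeq F n) i := by
  rw [fY, dif_pos ⟨Nat.succ_pos i, i.2⟩, ySeq, orbitProd_coordSeq]
  have hrev (j : Fin (i + 1 - 1)) : n - 1 - (j : ℕ) = n - (j + 1) := by omega
  simp only [Function.comp_apply, Fin.rev, hrev]
  rfl

theorem uInv_eq_twistedPairing : uInv F n = twistedPairing F n (xSeq F n) (ySeq F n) := by
  ext1 m
  rw [twistedPairing_xSeq_ySeq, uInv]
  split_ifs with h
  · simp [Int.toNat_of_nonpos (neg_nonpos.mpr h)]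
  · simp [Int.toNat_of_nonpos (not_le.mp h).le]

end Statement

/-- Theorem (main, part (b), generation): for `n ≥ 1` the invariant ring
`F_q[V ⊕ V*]^{B_n}` is the `F_q`-subalgebra generated by
`f̃_1,…,f̃_n, f̃_1^*,…,f̃_n^*, u_{1-n},…,u_{n-1}`. -/
theorem invariantRing_Bn_eq_adjoin (hn : 1 ≤ n) (p : MvPolynomial (Fin n ⊕ Fin n) F) :
    (∀ σ : GL (Fin n) F, isUpperTriangular F n σ → gact F n σ p = p) ↔
      p ∈ Algebra.adjoin F
        ((Set.range fun i : Fin n => fX F n (i.val + 1) ^ (Fintype.card F - 1)) ∪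
          (Set.range fun i : Fin n => fY F n (i.val + 1) ^ (Fintype.card F - 1)) ∪
          (uInv F n '' Set.Icc (1 - (n : ℤ)) ((n : ℤ) - 1))) := by
  have hfix : p ∈ fixedSubalgebra ((fun σ => biact σ σ) '' upperTriangularGL F n) ↔
      ∀ σ : GL (Fin n) F, isUpperTriangular F n σ → gact F n σ p = p :=
    mem_fixedSubalgebra.trans Set.forall_mem_image
  simp only [fX_succ, fY_succ, uInv_eq_twistedPairing]
  rw [← hfix, fixedSubalgebra_biact_eq, normSubalgebra, range_pairingFamily, ← Algebra.adjoin_union]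
  rfl
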